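/- Under Assumption 1, for all distinct i, k ∈ [m]: k belongs to the causal Markov boundary A(i) of X_i if and only if I(X_k → X_i ‖ X_{[m]∖{i,k}}) > 0. Equivalently, the minimal generative model graph (with an edge k → i iff k ∈ A(i)) and the directed information graph (with an edge k → i iff I(X_k → X_i ‖ X_{[m]∖{i,k}}) > 0) are identical. -/

import Mathlib

open Finset

/-- Probability of an event under the probability mass function `p` on a finite space. -/
noncomputable def pr {Ω : Type} [Fintype Ω] (p : Ω → ℝ) (E : Set Ω) : ℝ :=
  ∑ ω : Ω, E.indicator p ω

/-- Shannon conditional mutual information `I(A ; B | C)` of finite-valued random variables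
on a finite probability space with pmf `p` (terms with vanishing probability contribute `0`,
by the conventions `Real.log 0 = 0`, `x / 0 = 0`). -/
noncomputable def cmi {Ω α β γ : Type} [Fintype Ω] [Fintype α] [Fintype β] [Fintype γ]
    (p : Ω → ℝ) (A : Ω → α) (B : Ω → β) (C : Ω → γ) : ℝ :=
  ∑ a : α, ∑ b : β, ∑ c : γ,
    pr p {ω | A ω = a ∧ B ω = b ∧ C ω = c} *
      Real.log (pr p {ω | A ω = a ∧ B ω = b ∧ C ω = c} * pr p {ω | C ω = c} /
        (pr p {ω | A ω = a ∧ C ω = c} * pr p {ω | B ω = b ∧ C ω = c}))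

/-- `A` and `B` are conditionally independent given `C` (under the pmf `p`). -/
def CondIndep {Ω α β γ : Type} [Fintype Ω] (p : Ω → ℝ)
    (A : Ω → α) (B : Ω → β) (C : Ω → γ) : Prop :=
  ∀ (a : α) (b : β) (c : γ),
    pr p {ω | A ω = a ∧ B ω = b ∧ C ω = c} * pr p {ω | C ω = c}
      = pr p {ω | A ω = a ∧ C ω = c} * pr p {ω | B ω = b ∧ C ω = c}

/-- Trajectories of `m` processes over `n` time steps with alphabet `𝒳`:
`ω i j` is the value of process `i` at (0-indexed) time `j`. -/
abbrev Traj (m n : ℕ) (𝒳 : Type) := Fin m → Fin n → 𝒳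

/-- The past `X_S^{j-1}`: the values of the processes in `S` at times strictly before `j`;
all other entries are masked by `none`. -/
def past {m n : ℕ} {𝒳 : Type} (S : Finset (Fin m)) (j : Fin n) (ω : Traj m n 𝒳) :
    Fin m → Fin n → Option 𝒳 :=
  fun k t => if k ∈ S ∧ t < j then some (ω k t) else none

/-- Causally conditioned directed information
`I(X_S → X_i ‖ X_T) := Σ_{j=1}^{n} I(X_S^{j-1} ; X_{i,j} | X_i^{j-1}, X_T^{j-1})`. -/
noncomputable def di {m n : ℕ} {𝒳 : Type} [Fintype 𝒳] [DecidableEq 𝒳]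
    (p : Traj m n 𝒳 → ℝ) (S : Finset (Fin m)) (i : Fin m) (T : Finset (Fin m)) : ℝ :=
  ∑ j : Fin n,
    cmi p (past S j) (fun ω => ω i j) (fun ω => (past {i} j ω, past T j ω))

/-- Assumption 1: the joint distribution is strictly positive (and is a pmf), and at each
time `j` the variables `X_{1,j}, …, X_{m,j}` are mutually conditionally independent given
the full past `X_{[m]}^{j-1}` (stated in the division-free form
`P(joint ∧ past) · P(past)^{m-1} = Π_i P(X_{i,j} = x_i ∧ past)`). -/
def Assumption1 {m n : ℕ} {𝒳 : Type} [Fintype 𝒳] [DecidableEq 𝒳]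
    (p : Traj m n 𝒳 → ℝ) : Prop :=
  (∀ ω, 0 < p ω) ∧ (∑ ω : Traj m n 𝒳, p ω = 1) ∧
    ∀ (j : Fin n) (x : Fin m → 𝒳) (h : Fin m → Fin n → Option 𝒳),
      pr p {ω | (∀ i, ω i j = x i) ∧ past Finset.univ j ω = h} *
          pr p {ω | past Finset.univ j ω = h} ^ (m - 1)
        = ∏ i : Fin m, pr p {ω | ω i j = x i ∧ past Finset.univ j ω = h}

/-- `S ⊆ [m]∖{i}` is a causal Markov blanket of `X_i` if
`I(X_{[m]∖({i}∪S)} → X_i ‖ X_S) = 0`. -/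
def IsCausalBlanket {m n : ℕ} {𝒳 : Type} [Fintype 𝒳] [DecidableEq 𝒳]
    (p : Traj m n 𝒳 → ℝ) (i : Fin m) (S : Finset (Fin m)) : Prop :=
  S ⊆ Finset.univ.erase i ∧ di p (Finset.univ.erase i \ S) i S = 0

/-- A causal Markov boundary `A(i)` of `X_i` is a causal Markov blanket of minimum
cardinality. -/
def IsCausalBoundary {m n : ℕ} {𝒳 : Type} [Fintype 𝒳] [DecidableEq 𝒳]
    (p : Traj m n 𝒳 → ℝ) (i : Fin m) (A : Finset (Fin m)) : Prop :=
  IsCausalBlanket p i A ∧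
    ∀ B : Finset (Fin m), IsCausalBlanket p i B → A.card ≤ B.card

/-!
For a strictly positive pmf, `I(A ; B | C)` is a sum of nonnegative terms `q · klFun (P / q)`, where
`P` is the joint law and `q` the law making `A` and `B` conditionally independent given `C`; so it
vanishes iff the conditional law of `B` given `(A, C)` is a function of `C` alone. Hence `S` is a
causal Markov blanket of `X_i` iff the law of each `X_{i,j}` given the full past is a function of
the pasts of `X_i` and `X_S`. By positivity two trajectories may be spliced into a possible one:
what is a function of the pasts in `S`, and also of the pasts in `T`, is a function of the pasts in
`S ∩ T`. Blankets are therefore closed under intersections and supersets, a minimal one is the least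
one, and it avoids `k` exactly when `[m] ∖ {i, k}` is a blanket.
-/

section Probability

open InformationTheory

variable {Ω α β γ δ : Type} [Fintype Ω] {p : Ω → ℝ}

lemma pr_mono (hp : ∀ ω, 0 ≤ p ω) {E F : Set Ω} (h : E ⊆ F) : pr p E ≤ pr p F :=
  sum_le_sum fun ω _ => Set.indicator_le_indicator_of_subset h hp ω

lemma pr_nonneg (hp : ∀ ω, 0 ≤ p ω) (E : Set Ω) : 0 ≤ pr p E :=
  sum_nonneg fun ω _ => Set.indicator_nonneg (fun ω _ => hp ω) ω

lemma pr_pos (hp : ∀ ω, 0 < p ω) {E : Set Ω} (hE : E.Nonempty) : 0 < pr p E := by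
  obtain ⟨ω, hω⟩ := hE
  refine sum_pos' (fun ω _ => Set.indicator_nonneg (fun ω _ => (hp ω).le) ω) ⟨ω, mem_univ ω, ?_⟩
  simpa only [Set.indicator_of_mem hω] using hp ω

lemma pr_fiber_pos (hp : ∀ ω, 0 < p ω) (C : Ω → γ) (ω : Ω) : 0 < pr p {ω' | C ω' = C ω} :=
  pr_pos hp ⟨ω, rfl⟩

lemma pr_eq_zero_of_subset (hp : ∀ ω, 0 ≤ p ω) {E F : Set Ω} (hF : pr p F = 0) (hEF : E ⊆ F) :
    pr p E = 0 :=
  le_antisymm ((pr_mono hp hEF).trans_eq hF) (pr_nonneg hp E)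

lemma nonempty_of_pr_ne_zero {E : Set Ω} (hE : pr p E ≠ 0) : E.Nonempty := by
  by_contra hempty
  simp [pr, Set.not_nonempty_iff_eq_empty.mp hempty] at hE

lemma sum_pr_fiber {s : Finset α} {A : Ω → α} (hA : ∀ ω, A ω ∈ s) (E : Set Ω) :
    ∑ a ∈ s, pr p {ω | A ω = a ∧ ω ∈ E} = pr p E := by
  classical
  unfold pr
  rw [sum_comm]
  refine sum_congr rfl fun ω _ => ?_
  by_cases hω : ω ∈ E <;> simp [Set.indicator_apply, hω, hA]

/-! ### Conditional mutual information -/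

lemma mul_log_div_eq_sub_add_klFun {x y : ℝ} (h : y = 0 → x = 0) :
    x * Real.log (x / y) = x - y + y * klFun (x / y) := by
  by_cases hy : y = 0
  · simp [h hy, hy]
  · rw [klFun_apply]
    field_simp
    ring

lemma mul_klFun_div_eq_zero_iff {x y : ℝ} (hx : 0 ≤ x) (hy : 0 ≤ y) (h : y = 0 → x = 0) :
    y * klFun (x / y) = 0 ↔ x = y := by
  by_cases hy0 : y = 0
  · simp [h hy0, hy0]
  · rw [mul_eq_zero, or_iff_right hy0, klFun_eq_zero_iff (div_nonneg hx hy), div_eq_one_iff_eq hy0]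

lemma mul_klFun_div_nonneg {x y : ℝ} (hx : 0 ≤ x) (hy : 0 ≤ y) : 0 ≤ y * klFun (x / y) :=
  mul_nonneg hy (klFun_nonneg (div_nonneg hx hy))

/-- The joint law of `(A, B, C)` if `A` and `B` are made conditionally independent given `C` while
the laws of `(A, C)` and `(B, C)` are kept; it is `0` where `C = c` has probability `0`. -/
noncomputable def condProd (p : Ω → ℝ) (A : Ω → α) (B : Ω → β) (C : Ω → γ)
    (a : α) (b : β) (c : γ) : ℝ :=
  pr p {ω | A ω = a ∧ C ω = c} * pr p {ω | B ω = b ∧ C ω = c} / pr p {ω | C ω = c}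

lemma condProd_nonneg (hp : ∀ ω, 0 ≤ p ω) (A : Ω → α) (B : Ω → β) (C : Ω → γ)
    (a : α) (b : β) (c : γ) : 0 ≤ condProd p A B C a b c :=
  div_nonneg (mul_nonneg (pr_nonneg hp _) (pr_nonneg hp _)) (pr_nonneg hp _)

lemma pr_eq_zero_of_condProd_eq_zero (hp : ∀ ω, 0 ≤ p ω) {A : Ω → α} {B : Ω → β} {C : Ω → γ}
    {a : α} {b : β} {c : γ} (h : condProd p A B C a b c = 0) :
    pr p {ω | A ω = a ∧ B ω = b ∧ C ω = c} = 0 := by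
  rw [condProd, div_eq_zero_iff, mul_eq_zero] at h
  obtain (h | h) | h := h <;> refine pr_eq_zero_of_subset hp h ?_
  exacts [fun _ hω => ⟨hω.1, hω.2.2⟩, fun _ hω => hω.2, fun _ hω => hω.2.2]

lemma condIndep_iff_eq_condProd (hp : ∀ ω, 0 ≤ p ω) (A : Ω → α) (B : Ω → β) (C : Ω → γ) :
    CondIndep p A B C ↔
      ∀ a b c, pr p {ω | A ω = a ∧ B ω = b ∧ C ω = c} = condProd p A B C a b c := by
  refine forall_congr' fun a => forall_congr' fun b => forall_congr' fun c => ?_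
  by_cases hC : pr p {ω | C ω = c} = 0
  · have hABC : pr p {ω | A ω = a ∧ B ω = b ∧ C ω = c} = 0 :=
      pr_eq_zero_of_subset hp hC fun _ hω => hω.2.2
    have hAC : pr p {ω | A ω = a ∧ C ω = c} = 0 := pr_eq_zero_of_subset hp hC fun _ hω => hω.2
    simp only [condProd, hABC, hAC, zero_mul, zero_div]
  · rw [condProd, eq_div_iff hC]

lemma sum_pr_joint [Fintype α] [Fintype β] [Fintype γ] (A : Ω → α) (B : Ω → β) (C : Ω → γ) :
    ∑ a, ∑ b, ∑ c, pr p {ω | A ω = a ∧ B ω = b ∧ C ω = c} = ∑ c, pr p {ω | C ω = c} := by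
  rw [sum_comm_cycle]
  refine sum_congr rfl fun c _ => ?_
  calc ∑ a, ∑ b, pr p {ω | A ω = a ∧ B ω = b ∧ C ω = c}
    _ = ∑ b, ∑ a, pr p {ω | A ω = a ∧ B ω = b ∧ C ω = c} := sum_comm
    _ = ∑ b, pr p {ω | B ω = b ∧ C ω = c} :=
      sum_congr rfl fun b _ => sum_pr_fiber (fun ω => mem_univ (A ω)) {ω | B ω = b ∧ C ω = c}
    _ = pr p {ω | C ω = c} := sum_pr_fiber (fun ω => mem_univ (B ω)) {ω | C ω = c}

lemma sum_condProd [Fintype α] [Fintype β] [Fintype γ] (A : Ω → α) (B : Ω → β) (C : Ω → γ) :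
    ∑ a, ∑ b, ∑ c, condProd p A B C a b c = ∑ c, pr p {ω | C ω = c} := by
  rw [sum_comm_cycle]
  refine sum_congr rfl fun c _ => ?_
  calc ∑ a, ∑ b, condProd p A B C a b c
    _ = (∑ a, pr p {ω | A ω = a ∧ C ω = c}) * (∑ b, pr p {ω | B ω = b ∧ C ω = c}) /
          pr p {ω | C ω = c} := by
      simp only [condProd, sum_mul_sum, sum_div]
    _ = pr p {ω | C ω = c} * pr p {ω | C ω = c} / pr p {ω | C ω = c} :=
      congrArg₂ (· * · / _) (sum_pr_fiber (fun ω => mem_univ (A ω)) {ω | C ω = c})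
        (sum_pr_fiber (fun ω => mem_univ (B ω)) {ω | C ω = c})
    _ = pr p {ω | C ω = c} := mul_self_div_self _

lemma cmi_eq_sum_klFun [Fintype α] [Fintype β] [Fintype γ] (hp : ∀ ω, 0 ≤ p ω)
    (A : Ω → α) (B : Ω → β) (C : Ω → γ) :
    cmi p A B C = ∑ a, ∑ b, ∑ c, condProd p A B C a b c *
      klFun (pr p {ω | A ω = a ∧ B ω = b ∧ C ω = c} / condProd p A B C a b c) := by
  have summand_eq (a : α) (b : β) (c : γ) :
      pr p {ω | A ω = a ∧ B ω = b ∧ C ω = c} *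
        Real.log (pr p {ω | A ω = a ∧ B ω = b ∧ C ω = c} * pr p {ω | C ω = c} /
          (pr p {ω | A ω = a ∧ C ω = c} * pr p {ω | B ω = b ∧ C ω = c})) =
      pr p {ω | A ω = a ∧ B ω = b ∧ C ω = c} - condProd p A B C a b c +
        condProd p A B C a b c *
          klFun (pr p {ω | A ω = a ∧ B ω = b ∧ C ω = c} / condProd p A B C a b c) := by
    rw [← div_div_eq_mul_div]
    exact mul_log_div_eq_sub_add_klFun (pr_eq_zero_of_condProd_eq_zero hp)
  simp only [cmi, summand_eq, sum_add_distrib, sum_sub_distrib, sum_pr_joint, sum_condProd,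
    sub_self, zero_add]

lemma cmi_nonneg [Fintype α] [Fintype β] [Fintype γ] (hp : ∀ ω, 0 ≤ p ω)
    (A : Ω → α) (B : Ω → β) (C : Ω → γ) : 0 ≤ cmi p A B C := by
  rw [cmi_eq_sum_klFun hp]
  exact sum_nonneg fun a _ => sum_nonneg fun b _ => sum_nonneg fun c _ =>
    mul_klFun_div_nonneg (pr_nonneg hp _) (condProd_nonneg hp A B C a b c)

lemma cmi_eq_zero_iff [Fintype α] [Fintype β] [Fintype γ] (hp : ∀ ω, 0 ≤ p ω)
    (A : Ω → α) (B : Ω → β) (C : Ω → γ) : cmi p A B C = 0 ↔ CondIndep p A B C := by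
  have summand_nonneg (a : α) (b : β) (c : γ) := mul_klFun_div_nonneg
    (pr_nonneg hp {ω | A ω = a ∧ B ω = b ∧ C ω = c}) (condProd_nonneg hp A B C a b c)
  rw [cmi_eq_sum_klFun hp, condIndep_iff_eq_condProd hp, Fintype.sum_eq_zero_iff_of_nonneg
    fun a => sum_nonneg fun b _ => sum_nonneg fun c _ => summand_nonneg a b c, funext_iff]
  refine forall_congr' fun a => ?_
  rw [Pi.zero_apply, Fintype.sum_eq_zero_iff_of_nonneg
    fun b => sum_nonneg fun c _ => summand_nonneg a b c, funext_iff]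
  refine forall_congr' fun b => ?_
  rw [Pi.zero_apply, Fintype.sum_eq_zero_iff_of_nonneg (summand_nonneg a b), funext_iff]
  exact forall_congr' fun c => mul_klFun_div_eq_zero_iff (pr_nonneg hp _)
    (condProd_nonneg hp A B C a b c) (pr_eq_zero_of_condProd_eq_zero hp)

/-! ### Conditional probability given a random variable -/

/-- The conditional probability of the event `E` given the random variable `C`, as a function of the
outcome `ω`; it is `0` where the value `C ω` has probability `0`. -/
noncomputable def condPr (p : Ω → ℝ) (E : Set Ω) (C : Ω → γ) (ω : Ω) : ℝ :=
  pr p {ω' | ω' ∈ E ∧ C ω' = C ω} / pr p {ω' | C ω' = C ω}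

lemma condPr_factorsThrough (E : Set Ω) (C : Ω → γ) : (condPr p E C).FactorsThrough C := by
  intro ω₁ ω₂ hC
  simp only [condPr, hC]

lemma condPr_congr (E : Set Ω) {C : Ω → γ} {D : Ω → δ}
    (hCD : ∀ ω ω', C ω = C ω' ↔ D ω = D ω') : condPr p E C = condPr p E D := by
  funext ω
  simp only [condPr, hCD]

lemma condPr_mul_pr (hp : ∀ ω, 0 ≤ p ω) (E : Set Ω) (C : Ω → γ) (ω : Ω) :
    condPr p E C ω * pr p {ω' | C ω' = C ω} = pr p {ω' | ω' ∈ E ∧ C ω' = C ω} :=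
  div_mul_cancel_of_imp fun hC => pr_eq_zero_of_subset hp hC fun _ hω => hω.2

lemma condPr_prod_mul_pr (hp : ∀ ω, 0 ≤ p ω) (E : Set Ω) (A : Ω → α) (C : Ω → γ) (ω : Ω) :
    condPr p E (fun ω => (A ω, C ω)) ω * pr p {ω' | A ω' = A ω ∧ C ω' = C ω} =
      pr p {ω' | A ω' = A ω ∧ ω' ∈ E ∧ C ω' = C ω} := by
  simpa only [Prod.mk.injEq, and_left_comm] using condPr_mul_pr hp E (fun ω => (A ω, C ω)) ω

lemma condPr_prod_eq_iff_factorsThrough (hp : ∀ ω, 0 < p ω) (E : Set Ω) (A : Ω → α) (C : Ω → γ) :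
    condPr p E (fun ω => (A ω, C ω)) = condPr p E C ↔
      (condPr p E fun ω => (A ω, C ω)).FactorsThrough C := by
  refine ⟨fun h => h ▸ condPr_factorsThrough E C, fun h => funext fun ω₀ => ?_⟩
  have hp' : ∀ ω, 0 ≤ p ω := fun ω => (hp ω).le
  have joint_eq (a : α) : pr p {ω | A ω = a ∧ ω ∈ E ∧ C ω = C ω₀} =
      condPr p E (fun ω => (A ω, C ω)) ω₀ * pr p {ω | A ω = a ∧ C ω = C ω₀} := by
    by_cases hAC : pr p {ω | A ω = a ∧ C ω = C ω₀} = 0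
    · rw [hAC, mul_zero]
      exact pr_eq_zero_of_subset hp' hAC fun _ hω => ⟨hω.1, hω.2.2⟩
    · obtain ⟨ω, rfl, hC⟩ := nonempty_of_pr_ne_zero hAC
      rw [← h hC, ← hC, condPr_prod_mul_pr hp']
  classical
  have hA (ω : Ω) : A ω ∈ univ.image A := mem_image_of_mem A (mem_univ ω)
  rw [← mul_left_inj' (pr_fiber_pos hp C ω₀).ne', condPr_mul_pr hp']
  calc condPr p E (fun ω => (A ω, C ω)) ω₀ * pr p {ω | C ω = C ω₀}
    _ = condPr p E (fun ω => (A ω, C ω)) ω₀ *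
          ∑ a ∈ univ.image A, pr p {ω | A ω = a ∧ C ω = C ω₀} :=
      congrArg (_ * ·) (sum_pr_fiber hA {ω | C ω = C ω₀}).symm
    _ = ∑ a ∈ univ.image A, pr p {ω | A ω = a ∧ ω ∈ E ∧ C ω = C ω₀} := by
      simp only [mul_sum, joint_eq]
    _ = pr p {ω | ω ∈ E ∧ C ω = C ω₀} := sum_pr_fiber hA {ω | ω ∈ E ∧ C ω = C ω₀}

lemma condIndep_iff_condPr_prod_eq (hp : ∀ ω, 0 < p ω) (A : Ω → α) (B : Ω → β) (C : Ω → γ) :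
    CondIndep p A B C ↔
      ∀ b, condPr p {ω | B ω = b} (fun ω => (A ω, C ω)) = condPr p {ω | B ω = b} C := by
  have hp' : ∀ ω, 0 ≤ p ω := fun ω => (hp ω).le
  have joint_eq (b : β) (ω : Ω) := condPr_prod_mul_pr hp' {ω | B ω = b} A C ω
  have marginal_eq (b : β) (ω : Ω) := condPr_mul_pr hp' {ω | B ω = b} C ω
  simp only [Set.mem_ofPred_eq] at joint_eq marginal_eq
  constructor
  · intro h b
    funext ω
    have hAC : 0 < pr p {ω' | A ω' = A ω ∧ C ω' = C ω} := pr_pos hp ⟨ω, rfl, rfl⟩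
    have hC := pr_fiber_pos hp C ω
    refine mul_right_cancel₀ (mul_pos hAC hC).ne' ?_
    linear_combination h (A ω) b (C ω) + pr p {ω' | C ω' = C ω} * joint_eq b ω -
      pr p {ω' | A ω' = A ω ∧ C ω' = C ω} * marginal_eq b ω
  · intro h a b c
    by_cases hAC : pr p {ω | A ω = a ∧ C ω = c} = 0
    · have hABC : pr p {ω | A ω = a ∧ B ω = b ∧ C ω = c} = 0 :=
        pr_eq_zero_of_subset hp' hAC fun _ hω => ⟨hω.1, hω.2.2⟩
      rw [hAC, hABC, zero_mul, zero_mul]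
    · obtain ⟨ω, rfl, rfl⟩ := nonempty_of_pr_ne_zero hAC
      rw [← joint_eq, ← marginal_eq, h b]
      ring

lemma condIndep_iff_factorsThrough (hp : ∀ ω, 0 < p ω) (A : Ω → α) (B : Ω → β) (C : Ω → γ) :
    CondIndep p A B C ↔
      ∀ b, (condPr p {ω | B ω = b} fun ω => (A ω, C ω)).FactorsThrough C := by
  simp only [condIndep_iff_condPr_prod_eq hp, condPr_prod_eq_iff_factorsThrough hp]

end Probability

section DirectedInformation

variable {m n : ℕ} {𝒳 : Type}

/-! ### Functions of the past -/

lemma past_eq_past_iff {S : Finset (Fin m)} {j : Fin n} {ω ω' : Traj m n 𝒳} :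
    past S j ω = past S j ω' ↔ ∀ l ∈ S, ∀ t < j, ω l t = ω' l t := by
  simp only [funext_iff, past]
  refine forall_congr' fun l => ?_
  by_cases hl : l ∈ S
  · simp only [hl, true_and, forall_const]
    refine forall_congr' fun t => ?_
    by_cases ht : t < j <;> simp [ht]
  · simp [hl]

lemma past_union_eq_iff {S T : Finset (Fin m)} {j : Fin n} {ω ω' : Traj m n 𝒳} :
    past (S ∪ T) j ω = past (S ∪ T) j ω' ↔
      past S j ω = past S j ω' ∧ past T j ω = past T j ω' := by
  simp only [past_eq_past_iff, forall_mem_union]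

lemma factorsThrough_past_mono {β : Type*} {f : Traj m n 𝒳 → β} {S T : Finset (Fin m)} {j : Fin n}
    (hf : f.FactorsThrough (past S j)) (hST : S ⊆ T) : f.FactorsThrough (past T j) :=
  fun _ _ hT => hf (past_eq_past_iff.2 fun l hl => past_eq_past_iff.1 hT l (hST hl))

lemma factorsThrough_past_inter {β : Type*} {f : Traj m n 𝒳 → β} {S T : Finset (Fin m)} {j : Fin n}
    (hS : f.FactorsThrough (past S j)) (hT : f.FactorsThrough (past T j)) :
    f.FactorsThrough (past (S ∩ T) j) := by
  intro ω₁ ω₂ hω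
  rw [past_eq_past_iff] at hω
  calc f ω₁
    _ = f (S.piecewise ω₁ ω₂) := hS <| past_eq_past_iff.2 fun l hl t _ => by
      rw [piecewise_eq_of_mem _ _ _ hl]
    _ = f ω₂ := hT <| past_eq_past_iff.2 fun l hlT t ht => by
      by_cases hlS : l ∈ S
      · rw [piecewise_eq_of_mem _ _ _ hlS, hω l (mem_inter.2 ⟨hlS, hlT⟩) t ht]
      · rw [piecewise_eq_of_notMem _ _ _ hlS]

/-! ### Causal Markov blankets -/

variable [Fintype 𝒳] [DecidableEq 𝒳] {p : Traj m n 𝒳 → ℝ} {i k : Fin m} {S T A : Finset (Fin m)}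

lemma di_nonneg (hp : ∀ ω, 0 ≤ p ω) (S : Finset (Fin m)) (i : Fin m) (T : Finset (Fin m)) :
    0 ≤ di p S i T :=
  sum_nonneg fun _ _ => cmi_nonneg hp _ _ _

lemma di_eq_zero_iff_factorsThrough (hp : ∀ ω, 0 < p ω) (S : Finset (Fin m)) (i : Fin m)
    (T : Finset (Fin m)) :
    di p S i T = 0 ↔ ∀ (j : Fin n) (b : 𝒳),
      (condPr p {ω | ω i j = b} (past (S ∪ ({i} ∪ T)) j)).FactorsThrough (past ({i} ∪ T) j) := by
  have hp' : ∀ ω, 0 ≤ p ω := fun ω => (hp ω).le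
  have past_pair_eq_iff (j : Fin n) (ω ω' : Traj m n 𝒳) :
      (past {i} j ω, past T j ω) = (past {i} j ω', past T j ω') ↔
        past ({i} ∪ T) j ω = past ({i} ∪ T) j ω' := by
    rw [Prod.mk.injEq, past_union_eq_iff]
  have condPr_eq (j : Fin n) (b : 𝒳) :
      condPr p {ω | ω i j = b} (fun ω => (past S j ω, past {i} j ω, past T j ω)) =
        condPr p {ω | ω i j = b} (past (S ∪ ({i} ∪ T)) j) :=
    condPr_congr _ fun ω ω' => by rw [Prod.mk.injEq, past_pair_eq_iff, ← past_union_eq_iff]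
  rw [di, Fintype.sum_eq_zero_iff_of_nonneg fun j => cmi_nonneg hp' _ _ _, funext_iff]
  simp only [Pi.zero_apply, cmi_eq_zero_iff hp', condIndep_iff_factorsThrough hp, condPr_eq,
    Function.FactorsThrough, past_pair_eq_iff]

lemma isCausalBlanket_iff_factorsThrough (hp : ∀ ω, 0 < p ω) :
    IsCausalBlanket p i S ↔ S ⊆ univ.erase i ∧ ∀ (j : Fin n) (b : 𝒳),
      (condPr p {ω | ω i j = b} (past univ j)).FactorsThrough (past ({i} ∪ S) j) := by
  have hcover : univ.erase i \ S ∪ ({i} ∪ S) = univ := by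
    ext l
    simp only [mem_union, mem_sdiff, mem_erase, mem_univ, mem_singleton]
    tauto
  rw [IsCausalBlanket, di_eq_zero_iff_factorsThrough hp, hcover]

lemma IsCausalBlanket.mono (hp : ∀ ω, 0 < p ω) (hS : IsCausalBlanket p i S) (hST : S ⊆ T)
    (hT : T ⊆ univ.erase i) : IsCausalBlanket p i T := by
  rw [isCausalBlanket_iff_factorsThrough hp] at hS ⊢
  exact ⟨hT, fun j b => factorsThrough_past_mono (hS.2 j b) (union_subset_union_right hST)⟩

lemma IsCausalBlanket.inter (hp : ∀ ω, 0 < p ω) (hS : IsCausalBlanket p i S)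
    (hT : IsCausalBlanket p i T) : IsCausalBlanket p i (S ∩ T) := by
  rw [isCausalBlanket_iff_factorsThrough hp] at hS hT ⊢
  refine ⟨inter_subset_left.trans hS.1, fun j b => ?_⟩
  rw [union_inter_distrib_left]
  exact factorsThrough_past_inter (hS.2 j b) (hT.2 j b)

lemma minimal_isCausalBlanket_subset_iff (hp : ∀ ω, 0 < p ω)
    (hA : Minimal (IsCausalBlanket p i) A) (hT : T ⊆ univ.erase i) :
    A ⊆ T ↔ IsCausalBlanket p i T :=
  ⟨fun hAT => hA.prop.mono hp hAT hT, fun h =>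
    (hA.le_of_le (hA.prop.inter hp h) inter_subset_left).trans inter_subset_right⟩

lemma isCausalBlanket_erase_iff (hik : k ≠ i) :
    IsCausalBlanket p i ((univ.erase i).erase k) ↔ di p {k} i ((univ.erase i).erase k) = 0 := by
  rw [IsCausalBlanket, sdiff_erase_self (mem_erase.2 ⟨hik, mem_univ k⟩),
    and_iff_right (erase_subset _ _)]

lemma IsCausalBoundary.minimal (hA : IsCausalBoundary p i A) : Minimal (IsCausalBlanket p i) A :=
  ⟨hA.1, fun B hB hBA => (eq_of_subset_of_card_le hBA (hA.2 B hB)).ge⟩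

end DirectedInformation

theorem stmt_8_general {m n : ℕ} {𝒳 : Type} [Fintype 𝒳] [DecidableEq 𝒳]
    {p : Traj m n 𝒳 → ℝ} (hp : ∀ ω, 0 < p ω) {i k : Fin m} (hik : k ≠ i)
    {A : Finset (Fin m)} (hA : Minimal (IsCausalBlanket p i) A) :
    k ∈ A ↔ 0 < di p {k} i ((univ.erase i).erase k) := by
  calc k ∈ A
    _ ↔ ¬A ⊆ (univ.erase i).erase k := by
      rw [subset_erase, and_iff_right hA.prop.1, not_not]
    _ ↔ ¬di p {k} i ((univ.erase i).erase k) = 0 := by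
      rw [minimal_isCausalBlanket_subset_iff hp hA (erase_subset _ _),
        isCausalBlanket_erase_iff hik]
    _ ↔ 0 < di p {k} i ((univ.erase i).erase k) :=
      (di_nonneg (fun ω => (hp ω).le) _ _ _).lt_iff_ne'.symm

/-- equivalence of the minimal generative model graph and the directed
information graph. Under Assumption 1, for distinct `i, k`: `k` belongs to the causal
Markov boundary `A(i)` of `X_i` iff `I(X_k → X_i ‖ X_{[m]∖{i,k}}) > 0`. -/
theorem stmt_8 {m n : ℕ} (hm : 2 ≤ m) (hn : 1 ≤ n)
    {𝒳 : Type} [Fintype 𝒳] [DecidableEq 𝒳] [Nonempty 𝒳]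
    (p : Traj m n 𝒳 → ℝ) (hp : Assumption1 p)
    (i k : Fin m) (hik : k ≠ i)
    (A : Finset (Fin m)) (hA : IsCausalBoundary p i A) :
    k ∈ A ↔ 0 < di p {k} i ((Finset.univ.erase i).erase k) :=
  stmt_8_general hp.1 hik hA.minimal
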